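/- Let H be a real Hilbert space, F, G : H → ℝ convex Fréchet differentiable functions with G strongly convex with parameter α > 0, and ψ : H → (−∞,∞] convex proper. Suppose u* minimizes F + ψ, u_N minimizes G + ψ, and w is a point with ψ(w) ≤ ψ(u*). Then α‖w − u_N‖² ≤ ⟨∇G(w) − ∇G(u*), w − u_N⟩ + ⟨∇G(u*) − ∇F(u*), w − u_N⟩ + ⟨∇F(u*), w − u*⟩. -/

import Mathlib

open scoped RealInnerProductSpace

theorem aux_deriv {h : ℝ → ℝ} {m c : ℝ} (hd : HasDerivAt h m 0)
    (hc : ∀ t : ℝ, 0 < t → t < 1 → t * c ≤ h t - h 0) : c ≤ m := by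
  have h1 := hd.tendsto_slope_zero_right
  refine ge_of_tendsto h1 ?_
  have : Set.Ioo (0:ℝ) 1 ∈ nhdsWithin (0:ℝ) (Set.Ioi 0) := Ioo_mem_nhdsGT one_pos
  filter_upwards [this] with t ht
  have h2 := hc t ht.1 ht.2
  simp only [zero_add, smul_eq_mul]
  rw [inv_mul_eq_div, le_div_iff₀ ht.1]
  linarith

theorem aux_line {H : Type*} [NormedAddCommGroup H] [InnerProductSpace ℝ H] [CompleteSpace H]
    {F : H → ℝ} {p x : H} (d : H) (hF : HasGradientAt F p x) :
    HasDerivAt (fun t : ℝ => F (x + t • d)) ⟪p, d⟫ 0 := by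
  have h1 : HasDerivAt (fun t : ℝ => x + t • d) d 0 := by
    simpa using ((hasDerivAt_id (0:ℝ)).smul_const d).const_add x
  have h2 : HasFDerivAt F (InnerProductSpace.toDual ℝ H p) (x + (0:ℝ) • d) := by
    simpa using hF.hasFDerivAt
  have h3 := h2.comp_hasDerivAt (0:ℝ) h1
  rw [InnerProductSpace.toDual_apply_apply] at h3
  exact h3

theorem aux_opt {H : Type*} [NormedAddCommGroup H] [InnerProductSpace ℝ H] [CompleteSpace H]
    {F : H → ℝ} {p x v : H} (hF : HasGradientAt F p x) (ψ : H → EReal)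
    (hψconv : ∀ x y : H, ∀ a b : ℝ, 0 ≤ a → 0 ≤ b → a + b = 1 →
      ψ (a • x + b • y) ≤ (a : EReal) * ψ x + (b : EReal) * ψ y)
    (hmin : ∀ v : H, (F x : EReal) + ψ x ≤ (F v : EReal) + ψ v)
    {r s : ℝ} (hr : ψ x = r) (hs : ψ v = s) : r - s ≤ ⟪p, v - x⟫ := by
  refine aux_deriv (aux_line (v - x) hF) ?_
  intro t h0 h1
  have e : x + t • (v - x) = (1 - t) • x + t • v := by module
  have h2 := hψconv x v (1 - t) t (by linarith) h0.le (by ring)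
  have h3 := (hmin (x + t • (v - x))).trans (add_le_add_right (e ▸ h2) _)
  rw [hr, hs] at h3
  have h4 : F x + r ≤ F (x + t • (v - x)) + ((1 - t) * r + t * s) := by exact_mod_cast h3
  simp only [zero_smul, add_zero]
  linarith

theorem aux_conv {H : Type*} [NormedAddCommGroup H] [InnerProductSpace ℝ H] [CompleteSpace H]
    {G : H → ℝ} {p x : H} {α : ℝ} (hG : HasGradientAt G p x)
    (hsc : ConvexOn ℝ Set.univ (fun x => G x - α / 2 * ‖x‖ ^ 2)) (y : H) :
    ⟪p, y - x⟫ - α * ⟪x, y - x⟫ ≤ (G y - α / 2 * ‖y‖ ^ 2) - (G x - α / 2 * ‖x‖ ^ 2) := by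
  have h1 := aux_line (y - x) hG
  have h2 : HasDerivAt (fun t : ℝ => x + t • (y - x)) (y - x) 0 := by
    simpa using ((hasDerivAt_id (0:ℝ)).smul_const (y - x)).const_add x
  have h3 := (h1.sub (h2.norm_sq.const_mul (α / 2))).neg
  have := aux_deriv (c := -((G y - α / 2 * ‖y‖ ^ 2) - (G x - α / 2 * ‖x‖ ^ 2))) h3 ?_
  · simp only [zero_smul, add_zero] at this
    linarith
  · intro t h0 h1
    have e : x + t • (y - x) = (1 - t) • x + t • y := by module
    have h4 := hsc.2 (Set.mem_univ x) (Set.mem_univ y) (by linarith : 0 ≤ 1 - t) h0.le (by ring)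
    rw [← e] at h4
    simp only [smul_eq_mul] at h4
    simp only [Pi.neg_apply, Pi.sub_apply, zero_smul, add_zero]
    linarith

theorem stmt_8
    {H : Type*} [NormedAddCommGroup H] [InnerProductSpace ℝ H] [CompleteSpace H]
    (F G : H → ℝ) (f g : H → H) (α : ℝ) (hα : 0 < α)
    (hgradF : ∀ x : H, HasGradientAt F (f x) x)
    (hgradG : ∀ x : H, HasGradientAt G (g x) x)
    (hF : ConvexOn ℝ Set.univ F) (hG : ConvexOn ℝ Set.univ G)
    (hsc : ConvexOn ℝ Set.univ (fun x => G x - α / 2 * ‖x‖ ^ 2))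
    (ψ : H → EReal)
    (hψconv : ∀ x y : H, ∀ a b : ℝ, 0 ≤ a → 0 ≤ b → a + b = 1 →
      ψ (a • x + b • y) ≤ (a : EReal) * ψ x + (b : EReal) * ψ y)
    (hψproper : ∃ x : H, ψ x < ⊤)
    (hψbot : ∀ x : H, ⊥ < ψ x)
    (ustar uN w : H)
    (hminF : ∀ v : H, (F ustar : EReal) + ψ ustar ≤ (F v : EReal) + ψ v)
    (hminG : ∀ v : H, (G uN : EReal) + ψ uN ≤ (G v : EReal) + ψ v)
    (hw : ψ w ≤ ψ ustar)
    (huN : ψ uN < ⊤) (hwfin : ψ w < ⊤) :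
    α * ‖w - uN‖ ^ 2 ≤
      ⟪g w - g ustar, w - uN⟫ + ⟪g ustar - f ustar, w - uN⟫ +
        ⟪f ustar, w - ustar⟫ := by
  have hus : ψ ustar < ⊤ := by
    by_contra hcon
    have ht : ψ ustar = ⊤ := by simpa using hcon
    have h := hminF uN
    rw [ht, EReal.coe_add_top, top_le_iff] at h
    exact (EReal.add_lt_top (EReal.coe_ne_top _) huN.ne).ne h
  have e1 := (EReal.coe_toReal hus.ne (hψbot ustar).ne').symm
  have e2 := (EReal.coe_toReal huN.ne (hψbot uN).ne').symm
  have e3 := (EReal.coe_toReal hwfin.ne (hψbot w).ne').symm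
  have o1 := aux_opt (hgradF ustar) ψ hψconv hminF e1 e2
  have o2 := aux_opt (hgradG uN) ψ hψconv hminG e2 e3
  have o3 : (ψ w).toReal ≤ (ψ ustar).toReal := EReal.toReal_le_toReal hw (hψbot w).ne' hus.ne
  have c1 := aux_conv (hgradG uN) hsc w
  have c2 := aux_conv (hgradG w) hsc uN
  have n : ‖w - uN‖ ^ 2 = ⟪w, w⟫ - 2 * ⟪uN, w⟫ + ⟪uN, uN⟫ := by
    rw [norm_sub_sq_real, real_inner_self_eq_norm_sq, real_inner_self_eq_norm_sq,
      real_inner_comm]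
  rw [n]
  simp only [inner_sub_left, inner_sub_right] at *
  rw [real_inner_comm uN w] at c2
  linarith
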